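/- ∑_{k=1}^∞ (1728/4225)^k / (k² · C(3k,k)) = 6·arctan²(√3/7) − (1/2)·log²(25/13). -/

import Mathlib

open Real

/-! Write `F z` for the sum of `z ^ n / (n ^ 2 * C(3n, n))` over `n ≥ 1`. By the beta integral,
`F' z = ∫ t in 0..1, (1 - t) ^ 2 / (1 - z * t * (1 - t) ^ 2)` for `|z| < 27 / 4`.
Under `z = u ^ 3 / (1 - u) ^ 2` the cubic denominator splits off the linear factor `1 - u * t`, so
the integral is elementary and the chain rule shows that `F z` and
`6 * (π / 3 - arctan √(3 - 4u)) ^ 2 - log (1 - u) ^ 2 / 2` have the same derivative in `u`.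
Both vanish at `u = 0`, and `u = 12 / 25` gives `z = 1728 / 4225`. -/

theorem integral_pow_mul_one_sub_pow (m n : ℕ) :
    ∫ t in (0 : ℝ)..1, t ^ m * (1 - t) ^ n = 1 / ((m + 1) * ((m + n + 1).choose (m + 1) : ℝ)) := by
  have beta_eq : ((∫ t in (0 : ℝ)..1, t ^ m * (1 - t) ^ n : ℝ) : ℂ) =
      (m.factorial * n.factorial : ℂ) / (m + n + 1).factorial := by
    have h := Complex.betaIntegral_eq_Gamma_mul_div (m + 1) (n + 1)
      (by norm_cast; positivity) (by norm_cast; positivity)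
    rw [Complex.Gamma_nat_eq_factorial, Complex.Gamma_nat_eq_factorial,
      show (m + 1 + (n + 1) : ℂ) = ((m + n + 1 : ℕ) : ℂ) + 1 by push_cast; ring,
      Complex.Gamma_nat_eq_factorial] at h
    rw [← h, Complex.betaIntegral, ← intervalIntegral.integral_ofReal]
    simp only [add_sub_cancel_right, Complex.cpow_natCast]
    push_cast
    rfl
  have beta_eq_real : ∫ t in (0 : ℝ)..1, t ^ m * (1 - t) ^ n =
      (m.factorial * n.factorial : ℝ) / (m + n + 1).factorial :=
    Complex.ofReal_injective (by rw [beta_eq]; push_cast; rfl)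
  have choose_eq := Nat.choose_mul_factorial_mul_factorial (show m + 1 ≤ m + n + 1 by omega)
  rw [show m + n + 1 - (m + 1) = n by omega] at choose_eq
  have choose_ne : ((m + n + 1).choose (m + 1) : ℝ) ≠ 0 :=
    Nat.cast_ne_zero.mpr (Nat.choose_pos (by omega)).ne'
  rw [beta_eq_real, ← choose_eq, Nat.factorial_succ m]
  push_cast
  field_simp

theorem integral_pow_mul_one_sub_pow_two_mul (k : ℕ) :
    ∫ t in (0 : ℝ)..1, t ^ k * (1 - t) ^ (2 * (k + 1)) =
      1 / ((k + 1) * ((3 * (k + 1)).choose (k + 1) : ℝ)) := by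
  rw [integral_pow_mul_one_sub_pow, show k + 2 * (k + 1) + 1 = 3 * (k + 1) by ring]

theorem mul_one_sub_sq_mem_Icc {t : ℝ} (ht : t ∈ Set.Icc (0 : ℝ) 1) :
    t * (1 - t) ^ 2 ∈ Set.Icc (0 : ℝ) (4 / 27) := by
  obtain ⟨ht₀, ht₁⟩ := ht
  have factored : 4 / 27 - t * (1 - t) ^ 2 = (3 * t - 1) ^ 2 * (4 - 3 * t) / 27 := by ring
  refine ⟨by positivity, sub_nonneg.mp (factored ▸ ?_)⟩
  exact div_nonneg (mul_nonneg (sq_nonneg _) (by linarith)) (by norm_num)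

theorem pow_mul_one_sub_pow_two_mul_eq {R : Type*} [CommRing R] (t : R) (k : ℕ) :
    t ^ k * (1 - t) ^ (2 * (k + 1)) = (1 - t) ^ 2 * (t * (1 - t) ^ 2) ^ k := by
  rw [mul_pow, ← pow_mul]
  ring

theorem abs_pow_mul_one_sub_pow_two_mul_le {t : ℝ} (ht : t ∈ Set.Icc (0 : ℝ) 1) (k : ℕ) :
    |t ^ k * (1 - t) ^ (2 * (k + 1))| ≤ (4 / 27) ^ k := by
  obtain ⟨h₀, h₁⟩ := mul_one_sub_sq_mem_Icc ht
  have hsq : (1 - t) ^ 2 ≤ 1 := pow_le_one₀ (by linarith [ht.2]) (by linarith [ht.1])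
  rw [pow_mul_one_sub_pow_two_mul_eq, abs_of_nonneg (by positivity)]
  calc (1 - t) ^ 2 * (t * (1 - t) ^ 2) ^ k ≤ 1 * (4 / 27) ^ k := by gcongr
    _ = (4 / 27) ^ k := one_mul _

theorem one_div_succ_mul_choose_le (k : ℕ) :
    1 / ((k + 1) * ((3 * (k + 1)).choose (k + 1) : ℝ)) ≤ (4 / 27) ^ k := by
  rw [← integral_pow_mul_one_sub_pow_two_mul]
  refine (le_norm_self _).trans ?_
  have bound (t : ℝ) (ht : t ∈ Set.uIoc 0 1) :
      ‖t ^ k * (1 - t) ^ (2 * (k + 1))‖ ≤ (4 / 27) ^ k :=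
    abs_pow_mul_one_sub_pow_two_mul_le
      (Set.Ioc_subset_Icc_self (Set.uIoc_of_le (zero_le_one' ℝ) ▸ ht)) k
  simpa using intervalIntegral.norm_integral_le_of_norm_le_const bound

theorem hasSum_pow_div_succ_mul_choose {z : ℝ} (hz : |z| < 27 / 4) :
    HasSum (fun k : ℕ ↦ z ^ k / ((k + 1) * ((3 * (k + 1)).choose (k + 1) : ℝ)))
      (∫ t in (0 : ℝ)..1, (1 - t) ^ 2 / (1 - z * (t * (1 - t) ^ 2))) := by
  have ratio_lt : |z| * (4 / 27) < 1 := by linarith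
  have unit_of_mem : ∀ t ∈ Set.uIoc (0 : ℝ) 1, t ∈ Set.Icc (0 : ℝ) 1 := fun t ht ↦
    Set.Ioc_subset_Icc_self (Set.uIoc_of_le (zero_le_one' ℝ) ▸ ht)
  have hsum := intervalIntegral.hasSum_integral_of_dominated_convergence (a := 0) (b := 1)
    (μ := MeasureTheory.volume)
    (F := fun (k : ℕ) (t : ℝ) ↦ z ^ k * (t ^ k * (1 - t) ^ (2 * (k + 1))))
    (f := fun t ↦ (1 - t) ^ 2 / (1 - z * (t * (1 - t) ^ 2)))
    (fun k _ ↦ (|z| * (4 / 27)) ^ k)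
    (fun k ↦ Continuous.aestronglyMeasurable (by fun_prop))
    (fun k ↦ .of_forall fun t ht ↦ ?_)
    (.of_forall fun _ _ ↦ summable_geometric_of_lt_one (by positivity) ratio_lt)
    intervalIntegrable_const
    (.of_forall fun t ht ↦ ?_)
  · simpa only [intervalIntegral.integral_const_mul, integral_pow_mul_one_sub_pow_two_mul,
      mul_one_div] using hsum
  · rw [norm_mul, norm_pow, norm_eq_abs, norm_eq_abs, mul_pow]
    gcongr
    exact abs_pow_mul_one_sub_pow_two_mul_le (unit_of_mem t ht) k
  · obtain ⟨h₀, h₁⟩ := mul_one_sub_sq_mem_Icc (unit_of_mem t ht)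
    have abs_lt : |z * (t * (1 - t) ^ 2)| < 1 := by
      rw [abs_mul, abs_of_nonneg h₀]
      exact (mul_le_mul_of_nonneg_left h₁ (abs_nonneg z)).trans_lt ratio_lt
    simpa only [pow_mul_one_sub_pow_two_mul_eq, mul_pow z, mul_left_comm, div_eq_mul_inv] using
      (hasSum_geometric_of_abs_lt_one abs_lt).mul_left ((1 - t) ^ 2)

/-- The power series `∑ z ^ n / (n ^ 2 * C(3n, n))` over `n ≥ 1`, indexed by `k = n - 1`. -/
noncomputable def chooseSeries (z : ℝ) : ℝ :=
  ∑' k : ℕ, z ^ (k + 1) / (((k : ℝ) + 1) ^ 2 * (((3 * (k + 1)).choose (k + 1) : ℕ) : ℝ))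

theorem chooseSeries_zero : chooseSeries 0 = 0 := by
  simp [chooseSeries]

theorem hasDerivAt_chooseSeries {z : ℝ} (hz : |z| < 27 / 4) :
    HasDerivAt chooseSeries (∫ t in (0 : ℝ)..1, (1 - t) ^ 2 / (1 - z * (t * (1 - t) ^ 2))) z := by
  obtain ⟨r, hzr, hr⟩ := exists_between hz
  have r_pos : 0 < r := (abs_nonneg z).trans_lt hzr
  have term_deriv (k : ℕ) (y : ℝ) :
      HasDerivAt (fun y ↦ y ^ (k + 1) / ((k + 1 : ℝ) ^ 2 * ((3 * (k + 1)).choose (k + 1) : ℝ)))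
        (y ^ k / ((k + 1) * ((3 * (k + 1)).choose (k + 1) : ℝ))) y := by
    convert! (hasDerivAt_pow (k + 1) y).div_const _ using 1
    push_cast [add_tsub_cancel_right]
    rw [sq, mul_assoc, mul_div_mul_left _ _ (by positivity)]
  have deriv_bound (k : ℕ) (y : ℝ) (hy : y ∈ Metric.ball 0 r) :
      ‖y ^ k / ((k + 1) * ((3 * (k + 1)).choose (k + 1) : ℝ))‖ ≤ (r * (4 / 27)) ^ k := by
    have hy : |y| < r := by simpa using hy
    rw [div_eq_mul_one_div, norm_mul, norm_pow, norm_eq_abs, norm_of_nonneg (by positivity),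
      mul_pow]
    gcongr
    exact one_div_succ_mul_choose_le k
  rw [← (hasSum_pow_div_succ_mul_choose hz).tsum_eq]
  exact hasDerivAt_tsum_of_isPreconnected
    (summable_geometric_of_lt_one (by positivity) (by linarith)) Metric.isOpen_ball
    (convex_ball _ _).isPreconnected (fun k y _ ↦ term_deriv k y) deriv_bound
    (Metric.mem_ball_self r_pos) (by simp [summable_zero]) (by simpa using hzr)

/-- The substitution `z = u ^ 3 / (1 - u) ^ 2`, for which `t = 1 / u` is a root of the cubic
`1 - z * (t * (1 - t) ^ 2)`. -/
noncomputable def cubicParam (u : ℝ) : ℝ := u ^ 3 / (1 - u) ^ 2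

/-- The quadratic cofactor of `1 - u * t` in the cubic `1 - cubicParam u * (t * (1 - t) ^ 2)`,
scaled by `(1 - u) ^ 2` to clear denominators. -/
def quadFactor (u t : ℝ) : ℝ := (1 - u) ^ 2 + u * (1 - 2 * u) * t + u ^ 2 * t ^ 2

theorem one_sub_cubicParam_mul {u : ℝ} (hu : u ≠ 1) (t : ℝ) :
    1 - cubicParam u * (t * (1 - t) ^ 2) = (1 - u * t) * quadFactor u t / (1 - u) ^ 2 := by
  have : 1 - u ≠ 0 := sub_ne_zero.mpr hu.symm
  rw [cubicParam, quadFactor]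
  field_simp
  ring

theorem quadFactor_eq_sq_add (u t : ℝ) :
    quadFactor u t = ((2 * u * t + 1 - 2 * u) ^ 2 + (3 - 4 * u)) / 4 := by
  rw [quadFactor]
  ring

theorem quadFactor_pos {u : ℝ} (hu : u < 3 / 4) (t : ℝ) : 0 < quadFactor u t := by
  rw [quadFactor_eq_sq_add]
  linarith [sq_nonneg (2 * u * t + 1 - 2 * u)]

theorem one_sub_mul_pos {u t : ℝ} (hu : u < 1) (ht : t ∈ Set.Icc (0 : ℝ) 1) : 0 < 1 - u * t := by
  nlinarith [mul_nonneg (sub_nonneg.mpr hu.le) ht.1, ht.2]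

theorem cubicParam_zero : cubicParam 0 = 0 := by
  simp [cubicParam]

theorem cubicParam_nonneg {u : ℝ} (hu : 0 ≤ u) : 0 ≤ cubicParam u := by
  rw [cubicParam]
  positivity

theorem cubicParam_lt {u : ℝ} (hu : u < 3 / 4) : cubicParam u < 27 / 4 := by
  have : 0 < 1 - u := by linarith
  have factored : 27 * (1 - u) ^ 2 - 4 * u ^ 3 = (3 - u) ^ 2 * (3 - 4 * u) := by ring
  have : 0 < 27 * (1 - u) ^ 2 - 4 * u ^ 3 :=
    factored ▸ mul_pos (pow_pos (by linarith) 2) (by linarith)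
  rw [cubicParam, div_lt_div_iff₀ (by positivity) (by norm_num)]
  linarith

theorem hasDerivAt_cubicParam {u : ℝ} (hu : u ≠ 1) :
    HasDerivAt cubicParam (u ^ 2 * (3 - u) / (1 - u) ^ 3) u := by
  have : 1 - u ≠ 0 := sub_ne_zero.mpr hu.symm
  convert! (hasDerivAt_pow 3 u).div (((hasDerivAt_id u).const_sub 1).pow 2) (pow_ne_zero 2 this)
    using 1
  simp only [Pi.pow_apply, id_eq]
  field_simp
  ring

theorem partialFractions_cubicParam {u t : ℝ} (hu : u ≠ 1) (hlin : 1 - u * t ≠ 0)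
    (hquad : quadFactor u t ≠ 0) :
    u ^ 2 * (3 - u) * ((1 - t) ^ 2 / (1 - cubicParam u * (t * (1 - t) ^ 2))) =
      (1 - u) ^ 2 * ((1 - u) / (1 - u * t) - (1 - 2 * u + 2 * u * t) / quadFactor u t +
        u / quadFactor u t) := by
  have : 1 - u ≠ 0 := sub_ne_zero.mpr hu.symm
  rw [one_sub_cubicParam_mul hu]
  field_simp
  rw [quadFactor]
  ring

theorem hasDerivAt_quadFactor (u t : ℝ) :
    HasDerivAt (quadFactor u) (u * (1 - 2 * u + 2 * u * t)) t := by
  convert! (((hasDerivAt_id t).const_mul (u * (1 - 2 * u))).const_add ((1 - u) ^ 2)).add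
    ((hasDerivAt_pow 2 t).const_mul (u ^ 2)) using 1
  push_cast
  ring

theorem hasDerivAt_arctan_quadFactor {u w : ℝ} (hw : w ≠ 0) (hw_sq : w ^ 2 = 3 - 4 * u) (t : ℝ) :
    HasDerivAt (fun t ↦ 2 / w * arctan ((2 * u * t + 1 - 2 * u) / w)) (u / quadFactor u t) t := by
  have arg_deriv : HasDerivAt (fun t ↦ (2 * u * t + 1 - 2 * u) / w) (2 * u / w) t := by
    simpa using
      ((((hasDerivAt_id t).const_mul (2 * u)).add_const 1).sub_const (2 * u)).div_const w
  have one_add_sq : 1 + ((2 * u * t + 1 - 2 * u) / w) ^ 2 = 4 * quadFactor u t / w ^ 2 := by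
    rw [quadFactor_eq_sq_add, ← hw_sq]
    field_simp
    ring
  convert! arg_deriv.arctan.const_mul (2 / w) using 1
  rw [one_add_sq]
  field_simp
  norm_num

theorem arctan_sub_inv_div_two {w : ℝ} (hw : 0 < w) :
    arctan ((w - w⁻¹) / 2) = 2 * arctan w - π / 2 := by
  have h := arctan_add (x := w) (y := -w⁻¹) (by rw [mul_neg, mul_inv_cancel₀ hw.ne']; norm_num)
  rw [arctan_neg, arctan_inv_of_pos hw, mul_neg, mul_inv_cancel₀ hw.ne', sub_neg_eq_add,
    one_add_one_eq_two, ← sub_eq_add_neg w] at h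
  linarith

theorem hasDerivAt_antideriv_partialFractions {u w t : ℝ} (hu : u ≠ 0) (hw : w ≠ 0)
    (hw_sq : w ^ 2 = 3 - 4 * u) (hlin : 1 - u * t ≠ 0) (hquad : quadFactor u t ≠ 0) :
    HasDerivAt (fun t ↦ -((1 - u) / u) * log (1 - u * t) - 1 / u * log (quadFactor u t) +
        2 / w * arctan ((2 * u * t + 1 - 2 * u) / w))
      ((1 - u) / (1 - u * t) - (1 - 2 * u + 2 * u * t) / quadFactor u t + u / quadFactor u t)
      t := by
  have lin_deriv : HasDerivAt (fun t ↦ 1 - u * t) (-u) t := by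
    simpa using ((hasDerivAt_id t).const_mul u).const_sub 1
  convert! (((lin_deriv.log hlin).const_mul (-((1 - u) / u))).sub
    (((hasDerivAt_quadFactor u t).log hquad).const_mul (1 / u))).add
    (hasDerivAt_arctan_quadFactor hw hw_sq t) using 1
  field_simp

theorem integral_partialFractions {u w : ℝ} (hu : u ≠ 0) (hw : 0 < w) (hw_sq : w ^ 2 = 3 - 4 * u) :
    ∫ t in (0 : ℝ)..1, ((1 - u) / (1 - u * t) - (1 - 2 * u + 2 * u * t) / quadFactor u t +
        u / quadFactor u t) =
      log (1 - u) + 6 * (π / 3 - arctan w) / w := by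
  have hu_lt : u < 3 / 4 := by linarith [pow_pos hw 2]
  have lin_ne (t : ℝ) (ht : t ∈ Set.uIcc (0 : ℝ) 1) : 1 - u * t ≠ 0 :=
    (one_sub_mul_pos (by linarith) (Set.uIcc_of_le (zero_le_one' ℝ) ▸ ht)).ne'
  have quad_ne (t : ℝ) : quadFactor u t ≠ 0 := (quadFactor_pos hu_lt t).ne'
  have quad_continuous : Continuous (quadFactor u) := by unfold quadFactor; fun_prop
  have integrand_continuousOn : ContinuousOn (fun t ↦ (1 - u) / (1 - u * t) -
      (1 - 2 * u + 2 * u * t) / quadFactor u t + u / quadFactor u t) (Set.uIcc (0 : ℝ) 1) := by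
    fun_prop (disch := grind)
  rw [intervalIntegral.integral_eq_sub_of_hasDerivAt
    (fun t ht ↦ hasDerivAt_antideriv_partialFractions hu hw.ne' hw_sq (lin_ne t ht) (quad_ne t))
    integrand_continuousOn.intervalIntegrable]
  have arctan_at_one : arctan ((2 * u * 1 + 1 - 2 * u) / w) = π / 2 - arctan w := by
    rw [← arctan_inv_of_pos hw]
    congr 1
    ring
  have arctan_at_zero : arctan ((2 * u * 0 + 1 - 2 * u) / w) = 2 * arctan w - π / 2 := by
    rw [← arctan_sub_inv_div_two hw]
    congr 1
    field_simp
    rw [hw_sq]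
    ring
  have quad_at_one : quadFactor u 1 = 1 - u := by rw [quadFactor]; ring
  have quad_at_zero : quadFactor u 0 = (1 - u) ^ 2 := by rw [quadFactor]; ring
  rw [arctan_at_one, arctan_at_zero, quad_at_one, quad_at_zero, log_pow, mul_one, mul_zero,
    sub_zero, log_one]
  field_simp
  push_cast
  ring

theorem integral_cubicParam {u : ℝ} (hu : u < 3 / 4) :
    u ^ 2 * (3 - u) * ∫ t in (0 : ℝ)..1, (1 - t) ^ 2 / (1 - cubicParam u * (t * (1 - t) ^ 2)) =
      (1 - u) ^ 2 * (log (1 - u) + 6 * (π / 3 - arctan √(3 - 4 * u)) / √(3 - 4 * u)) := by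
  rcases eq_or_ne u 0 with rfl | hu₀
  · simp [arctan_sqrt_three]
  · have w_pos : 0 < √(3 - 4 * u) := sqrt_pos.mpr (by linarith)
    have w_sq : √(3 - 4 * u) ^ 2 = 3 - 4 * u := sq_sqrt (by linarith)
    rw [← integral_partialFractions hu₀ w_pos w_sq, ← intervalIntegral.integral_const_mul,
      ← intervalIntegral.integral_const_mul]
    refine intervalIntegral.integral_congr fun t ht ↦ ?_
    rw [Set.uIcc_of_le zero_le_one] at ht
    exact partialFractions_cubicParam (by linarith) (one_sub_mul_pos (by linarith) ht).ne'
      (quadFactor_pos hu t).ne'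

/-- The elementary expression in `u` equal to `chooseSeries (cubicParam u)` for `0 ≤ u < 3 / 4`. -/
noncomputable def closedForm (u : ℝ) : ℝ :=
  6 * (π / 3 - arctan √(3 - 4 * u)) ^ 2 - 1 / 2 * log (1 - u) ^ 2

theorem closedForm_zero : closedForm 0 = 0 := by
  simp [closedForm, arctan_sqrt_three]

theorem hasDerivAt_closedForm {u : ℝ} (hu : u < 3 / 4) :
    HasDerivAt closedForm
      ((log (1 - u) + 6 * (π / 3 - arctan √(3 - 4 * u)) / √(3 - 4 * u)) / (1 - u)) u := by
  have one_sub_pos : 0 < 1 - u := by linarith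
  have w_pos : 0 < √(3 - 4 * u) := sqrt_pos.mpr (by linarith)
  have radicand_deriv : HasDerivAt (fun u : ℝ ↦ 3 - 4 * u) (-4) u := by
    simpa using ((hasDerivAt_id u).const_mul 4).const_sub 3
  have angle_deriv : HasDerivAt (fun u ↦ π / 3 - arctan √(3 - 4 * u))
      (1 / (2 * √(3 - 4 * u) * (1 - u))) u := by
    convert! (radicand_deriv.sqrt (by linarith)).arctan.const_sub (π / 3) using 1
    rw [sq_sqrt (by linarith), show 1 + (3 - 4 * u) = 4 * (1 - u) by ring]
    field_simp
  have log_deriv := ((hasDerivAt_id u).const_sub 1).log one_sub_pos.ne'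
  convert! ((angle_deriv.pow 2).const_mul 6).sub ((log_deriv.pow 2).const_mul (1 / 2)) using 1
  simp only [id_eq]
  field_simp
  push_cast
  ring

theorem hasDerivAt_chooseSeries_cubicParam {u : ℝ} (hu₀ : 0 ≤ u) (hu : u < 3 / 4) :
    HasDerivAt (chooseSeries ∘ cubicParam)
      ((log (1 - u) + 6 * (π / 3 - arctan √(3 - 4 * u)) / √(3 - 4 * u)) / (1 - u)) u := by
  have one_sub_pos : 0 < 1 - u := by linarith
  have abs_lt : |cubicParam u| < 27 / 4 := by
    rw [abs_of_nonneg (cubicParam_nonneg hu₀)]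
    exact cubicParam_lt hu
  convert! (hasDerivAt_chooseSeries abs_lt).comp u (hasDerivAt_cubicParam (by linarith)) using 1
  rw [mul_div_assoc', mul_comm _ (_ * _), integral_cubicParam hu, pow_succ (1 - u) 2,
    mul_div_mul_left _ _ (by positivity)]

theorem chooseSeries_cubicParam {u : ℝ} (hu₀ : 0 ≤ u) (hu : u < 3 / 4) :
    chooseSeries (cubicParam u) = closedForm u := by
  have series_deriv (x : ℝ) (hx : x ∈ Set.Icc 0 u) :=
    hasDerivAt_chooseSeries_cubicParam hx.1 (hx.2.trans_lt hu)
  have closed_deriv (x : ℝ) (hx : x ∈ Set.Icc 0 u) := hasDerivAt_closedForm (hx.2.trans_lt hu)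
  exact eq_of_has_deriv_right_eq
    (fun x hx ↦ (series_deriv x (Set.Ico_subset_Icc_self hx)).hasDerivWithinAt)
    (fun x hx ↦ (closed_deriv x (Set.Ico_subset_Icc_self hx)).hasDerivWithinAt)
    (fun x hx ↦ (series_deriv x hx).continuousAt.continuousWithinAt)
    (fun x hx ↦ (closed_deriv x hx).continuousAt.continuousWithinAt)
    (by simp only [Function.comp_apply, cubicParam_zero, chooseSeries_zero, closedForm_zero])
    u (Set.right_mem_Icc.mpr hu₀)

theorem arctan_sqrt_three_div_seven : arctan (√3 / 7) = π / 3 - arctan (3 * √3 / 5) := by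
  have sqrt_sq : √3 * √3 = (3 : ℝ) := mul_self_sqrt (by norm_num)
  have denominator : 1 - √3 / 7 * (3 * √3 / 5) = 26 / 35 := by linarith
  rw [eq_sub_iff_add_eq, arctan_add (by linarith), denominator, ← arctan_sqrt_three]
  congr 1
  ring

theorem closedForm_twelve_div_twenty_five :
    closedForm (12 / 25) = 6 * arctan (√3 / 7) ^ 2 - 1 / 2 * log (25 / 13) ^ 2 := by
  have sqrt_eq : √(3 - 4 * (12 / 25)) = 3 * √3 / 5 := by
    rw [show (3 - 4 * (12 / 25) : ℝ) = 3 * (3 / 5) ^ 2 by norm_num, sqrt_mul (by norm_num),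
      sqrt_sq (by norm_num)]
    ring
  have log_eq : log (1 - 12 / 25) = -log (25 / 13) := by
    rw [← log_inv]
    norm_num
  rw [closedForm, sqrt_eq, ← arctan_sqrt_three_div_seven, log_eq, neg_sq]

theorem stmt_9 :
    ∑' k : ℕ, (1728/4225 : ℝ)^(k+1) / (((k:ℝ)+1)^2 * (((3*(k+1)).choose (k+1) : ℕ) : ℝ)) =
    6*(Real.arctan (Real.sqrt 3/7))^2 - (1/2)*(Real.log (25/13))^2 := by
  have param_eq : cubicParam (12 / 25) = 1728 / 4225 := by norm_num [cubicParam]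
  rw [← closedForm_twelve_div_twenty_five,
    ← chooseSeries_cubicParam (by norm_num) (by norm_num), param_eq, chooseSeries]
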